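/- arXiv:1305.1966 — 3 statements merged into one kernel-verified Lean document; each statement's English description precedes it below -/
import Mathlib

section
/- (Picard's integral representation) Let a, b, b', c be complex numbers with Re(c) > Re(a) > 0 and c not a nonpositive integer, and let x, y be real numbers with |x| < 1 and |y| < 1. Then ∫₀¹ u^{a−1} (1−u)^{c−a−1} (1−ux)^{−b} (1−uy)^{−b'} du = (Γ(a)Γ(c−a)/Γ(c)) · F₁(a; b, b'; c; x, y). -/
noncomputable def poch (a : ℂ) (n : ℕ) : ℂ := ∏ i ∈ Finset.range n, (a + i)

/-- Appell series F₁(a;b,b';c;x,y). -/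
noncomputable def appellF1 (a b b' c x y : ℂ) : ℂ :=
  ∑' p : ℕ × ℕ, poch a (p.1 + p.2) * poch b p.1 * poch b' p.2 /
    (p.1.factorial * p.2.factorial * poch c (p.1 + p.2)) * x ^ p.1 * y ^ p.2

/-!
For `‖x‖, ‖y‖ < 1` the binomial theorem expands `(1 - u x)^(-b) (1 - u y)^(-b')` as a double power
series in `u` which converges absolutely even at `u = 1`. It may therefore be integrated term by
term against the integrable weight `u^(a-1) (1-u)^(c-a-1)`. The monomial `u^n` contributes the beta
integral `B(a + n, c - a)`, which is `(a)_n / (c)_n` times `Γ(a) Γ(c - a) / Γ(c)`.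
-/

open MeasureTheory Set

open scoped Nat

lemma poch_eq_ascPochhammer_eval (a : ℂ) (n : ℕ) : poch a n = (ascPochhammer ℂ n).eval a := by
  induction n with
  | zero => simp [poch]
  | succ n ih => rw [ascPochhammer_succ_eval, ← ih, poch, poch, Finset.prod_range_succ]

lemma ne_neg_natCast_of_re_pos {s : ℂ} (hs : 0 < s.re) (n : ℕ) : s ≠ -(n : ℂ) := by
  rintro rfl
  simp only [Complex.neg_re, Complex.natCast_re] at hs
  linarith [n.cast_nonneg (α := ℝ)]

lemma Gamma_add_natCast_eq_poch_mul {s : ℂ} (hs : ∀ k : ℕ, s ≠ -(k : ℂ)) (n : ℕ) :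
    Complex.Gamma (s + n) = poch s n * Complex.Gamma s := by
  rw [poch_eq_ascPochhammer_eval, ← Complex.Gamma_add_nat_div_Gamma_eq s hs,
    div_mul_cancel₀ _ (Complex.Gamma_ne_zero hs)]

lemma betaIntegral_add_natCast {s t : ℂ} (hs : 0 < s.re) (ht : 0 < t.re) (n : ℕ) :
    Complex.betaIntegral (s + n) t =
      Complex.Gamma s * Complex.Gamma t / Complex.Gamma (s + t) *
        (poch s n / poch (s + t) n) := by
  have hsn : 0 < (s + n).re := by simpa using add_pos_of_pos_of_nonneg hs n.cast_nonneg
  have hst : 0 < (s + t).re := by simpa using add_pos hs ht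
  rw [Complex.betaIntegral_eq_Gamma_mul_div _ _ hsn ht, add_right_comm,
    Gamma_add_natCast_eq_poch_mul (ne_neg_natCast_of_re_pos hs),
    Gamma_add_natCast_eq_poch_mul (ne_neg_natCast_of_re_pos hst)]
  ring

lemma integral_beta_weight_mul_pow (s t : ℂ) (n : ℕ) :
    ∫ u in (0 : ℝ)..1, (u : ℂ) ^ (s - 1) * ((1 : ℂ) - u) ^ (t - 1) * (u : ℂ) ^ n =
      Complex.betaIntegral (s + n) t := by
  refine intervalIntegral.integral_congr_ae (.of_forall fun u hu => ?_)
  rw [uIoc_of_le zero_le_one] at hu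
  have hu0 : (u : ℂ) ≠ 0 := Complex.ofReal_ne_zero.mpr hu.1.ne'
  rw [add_sub_right_comm, Complex.cpow_add _ _ hu0, Complex.cpow_natCast]
  ring

lemma hasSum_poch_div_factorial_mul_pow (b : ℂ) {z : ℂ} (hz : ‖z‖ < 1) :
    HasSum (fun n : ℕ => poch b n / n ! * z ^ n) ((1 - z) ^ (-b)) := by
  have coeff_eq (n : ℕ) : Ring.choose (b + n - 1) n = poch b n / n ! := by
    rw [← Ring.multichoose_eq, poch_eq_ascPochhammer_eval,
      ← Polynomial.ascPochhammer_smeval_eq_eval,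
      ← Ring.factorial_nsmul_multichoose_eq_ascPochhammer, nsmul_eq_mul,
      mul_div_cancel_left₀ _ (Nat.cast_ne_zero.mpr n.factorial_ne_zero)]
  have hz' : z ∈ Metric.eball (0 : ℂ) 1 := by
    rw [← ENNReal.ofReal_one, Metric.eball_ofReal]
    simpa using hz
  simpa only [zero_add, FormalMultilinearSeries.ofScalars_apply_eq, smul_eq_mul, coeff_eq,
    one_div, ← Complex.cpow_neg] using
    (Complex.one_div_one_sub_cpow_hasFPowerSeriesOnBall_zero b).hasSum hz'

lemma hasSum_picard_kernel (b b' : ℂ) {x y u : ℂ} (hx : ‖u * x‖ < 1) (hy : ‖u * y‖ < 1) :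
    HasSum (fun p : ℕ × ℕ =>
        poch b p.1 / p.1 ! * x ^ p.1 * (poch b' p.2 / p.2 ! * y ^ p.2) * u ^ (p.1 + p.2))
      ((1 - u * x) ^ (-b) * (1 - u * y) ^ (-b')) := by
  have hsum_x := hasSum_poch_div_factorial_mul_pow b hx
  have hsum_y := hasSum_poch_div_factorial_mul_pow b' hy
  have summable_mul := summable_mul_of_summable_norm hsum_x.summable.norm hsum_y.summable.norm
  exact (hsum_x.mul hsum_y summable_mul).congr_fun fun p => by ring

lemma hasSum_integral_mul_pow {ι : Type*} [Countable ι] {w g : ℝ → ℂ} {κ : ι → ℂ} {d : ι → ℕ}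
    (hw : IntervalIntegrable w volume 0 1)
    (hg : ∀ u ∈ Ioc (0 : ℝ) 1, HasSum (fun i => κ i * (u : ℂ) ^ d i) (g u)) :
    HasSum (fun i => κ i * ∫ u in (0 : ℝ)..1, w u * (u : ℂ) ^ d i)
      (∫ u in (0 : ℝ)..1, w u * g u) := by
  -- `HasSum` in `ℂ` is absolute convergence, so the case `u = 1` dominates the series on `(0, 1]`.
  have hκ : Summable fun i => ‖κ i‖ := by
    simpa using (hg 1 (right_mem_Ioc.mpr one_pos)).summable.norm
  simp only [← intervalIntegral.integral_const_mul]
  refine intervalIntegral.hasSum_integral_of_dominated_convergence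
    (fun i u => ‖κ i‖ * ‖w u‖) (fun i => ?_) (fun i => .of_forall fun u hu => ?_)
    (.of_forall fun u _ => hκ.mul_right _) ?_ (.of_forall fun u hu => ?_)
  · exact (hw.def'.aestronglyMeasurable.mul (by fun_prop)).const_mul _
  · rw [uIoc_of_le zero_le_one] at hu
    have norm_pow_le : ‖(u : ℂ) ^ d i‖ ≤ 1 := by
      rw [norm_pow, Complex.norm_of_nonneg hu.1.le]
      exact pow_le_one₀ hu.1.le hu.2
    rw [norm_mul, norm_mul]
    gcongr
    exact mul_le_of_le_one_right (norm_nonneg _) norm_pow_le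
  · simpa only [tsum_mul_right] using hw.norm.const_mul _
  · rw [uIoc_of_le zero_le_one] at hu
    simpa only [mul_left_comm] using (hg u hu).mul_left (w u)

theorem picard_integral_appellF1_general (a b b' c x y : ℂ)
    (ha : 0 < a.re) (hac : a.re < c.re) (hx : ‖x‖ < 1) (hy : ‖y‖ < 1) :
    ∫ u in (0 : ℝ)..1, (u : ℂ) ^ (a - 1) * ((1 : ℂ) - u) ^ (c - a - 1) *
        ((1 : ℂ) - u * x) ^ (-b) * ((1 : ℂ) - u * y) ^ (-b') =
      Complex.Gamma a * Complex.Gamma (c - a) / Complex.Gamma c *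
        appellF1 a b b' c x y := by
  have hca : 0 < (c - a).re := by simpa using hac
  have norm_mul_lt_one {u : ℝ} (hu : u ∈ Ioc 0 1) {z : ℂ} (hz : ‖z‖ < 1) : ‖(u : ℂ) * z‖ < 1 := by
    rw [norm_mul, Complex.norm_of_nonneg hu.1.le]
    exact (mul_le_of_le_one_left (norm_nonneg z) hu.2).trans_lt hz
  have integrated := hasSum_integral_mul_pow (Complex.betaIntegral_convergent ha hca)
    fun u hu => hasSum_picard_kernel b b' (norm_mul_lt_one hu hx) (norm_mul_lt_one hu hy)
  simp only [integral_beta_weight_mul_pow, betaIntegral_add_natCast ha hca, add_sub_cancel,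
    ← mul_assoc] at integrated
  rw [← integrated.tsum_eq, appellF1, ← tsum_mul_left]
  refine tsum_congr fun p => ?_
  ring

theorem picard_integral_appellF1 (a b b' c : ℂ) (x y : ℝ)
    (ha : 0 < a.re) (hac : a.re < c.re) (hc : ∀ n : ℕ, c ≠ -(n : ℂ))
    (hx : |x| < 1) (hy : |y| < 1) :
    ∫ u in (0:ℝ)..1, (u : ℂ) ^ (a - 1) * ((1 : ℂ) - u) ^ (c - a - 1) *
        ((1 : ℂ) - u * x) ^ (-b) * ((1 : ℂ) - u * y) ^ (-b') =
      Complex.Gamma a * Complex.Gamma (c - a) / Complex.Gamma c *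
        appellF1 a b b' c x y :=
  picard_integral_appellF1_general a b b' c x y ha hac (by simpa using hx) (by simpa using hy)
end

section
/- Let a, b, b', c, c' be complex numbers with Re(c) > Re(b) > 0 and Re(c') > Re(b') > 0, with c and c' not nonpositive integers, and let x, y be real numbers with |x| + |y| < 1. Then ∫₀¹∫₀¹ u^{b−1} v^{b'−1} (1−u)^{c−b−1} (1−v)^{c'−b'−1} (1−ux−vy)^{−a} du dv = (Γ(b)Γ(b')Γ(c−b)Γ(c'−b')/(Γ(c)Γ(c'))) · F₂(a; b, b'; c, c'; x, y). -/
/-- Appell series F₂(a;b,b';c,c';x,y). -/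
noncomputable def appellF2 (a b b' c c' x y : ℂ) : ℂ :=
  ∑' p : ℕ × ℕ, poch a (p.1 + p.2) * poch b p.1 * poch b' p.2 /
    (p.1.factorial * p.2.factorial * poch c p.1 * poch c' p.2) * x ^ p.1 * y ^ p.2

/-!
Expand `(1 - u x - v y) ^ (-a)` by the binomial series in `u x + v y` and then each power of
`u x + v y` by the binomial theorem. Absolute convergence for `‖x‖ + ‖y‖ < 1` lets the resulting
double series be integrated term by term on the product of the two intervals, where the integral of
each term splits into a product of two moments of beta weights, and those moments are ratios of
Pochhammer symbols.
-/

open MeasureTheory Finset Complex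

section Antidiagonal

variable {A E : Type*} [AddMonoid A] [HasAntidiagonal A]

lemma summable_norm_of_summable_sum_antidiagonal_norm [SeminormedAddCommGroup E] {f : A × A → E}
    (hf : Summable fun n ↦ ∑ p ∈ antidiagonal n, ‖f p‖) : Summable fun p ↦ ‖f p‖ := by
  rw [← HasAntidiagonal.sigmaAntidiagonalEquivProd.summable_iff]
  refine (summable_sigma_of_nonneg fun _ ↦ norm_nonneg _).2
    ⟨fun n ↦ (hasSum_fintype _).summable, hf.congr fun n ↦ ?_⟩
  rw [tsum_fintype]
  exact (sum_coe_sort (antidiagonal n) fun p ↦ ‖f p‖).symm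

lemma hasSum_prod_of_hasSum_sum_antidiagonal [AddCommMonoid E] [TopologicalSpace E]
    [ContinuousAdd E] [T3Space E] {f : A × A → E} {s : E} (hf : Summable f)
    (hs : HasSum (fun n ↦ ∑ p ∈ antidiagonal n, f p) s) : HasSum f s := by
  have hsigma : HasSum (fun n ↦ ∑ p ∈ antidiagonal n, f p) (∑' p, f p) :=
    (HasAntidiagonal.sigmaAntidiagonalEquivProd.hasSum_iff.2 hf.hasSum).sigma fun n ↦ by
      rw [← sum_coe_sort]
      exact hasSum_fintype _
  exact hs.unique hsigma ▸ hf.hasSum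

end Antidiagonal

section DoubleExponentialSeries

lemma sum_antidiagonal_div_factorial_mul_pow {K : Type*} [Field K] [CharZero K] (f : ℕ → K)
    (s t : K) (n : ℕ) :
    ∑ p ∈ antidiagonal n,
        f (p.1 + p.2) / (p.1.factorial * p.2.factorial) * s ^ p.1 * t ^ p.2 =
      f n / n.factorial * (s + t) ^ n := by
  rw [(Commute.all s t).add_pow', mul_sum]
  refine sum_congr rfl fun p hp ↦ ?_
  have hn : ((p.1 + p.2).factorial : K) ≠ 0 := Nat.cast_ne_zero.2 (Nat.factorial_ne_zero _)
  rw [← mem_antidiagonal.1 hp, nsmul_eq_mul, Nat.cast_add_choose]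
  field_simp

variable {K : Type*} [RCLike K] {f : ℕ → K} {s t : K}

lemma summable_norm_div_factorial_mul_pow
    (h : Summable fun n ↦ ‖f n‖ / n.factorial * (‖s‖ + ‖t‖) ^ n) :
    Summable fun p : ℕ × ℕ ↦
      ‖f (p.1 + p.2) / (p.1.factorial * p.2.factorial) * s ^ p.1 * t ^ p.2‖ := by
  refine summable_norm_of_summable_sum_antidiagonal_norm (h.congr fun n ↦ ?_)
  rw [← sum_antidiagonal_div_factorial_mul_pow (‖f ·‖)]
  simp only [norm_mul, norm_div, norm_pow, RCLike.norm_natCast]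

lemma hasSum_div_factorial_mul_pow {z : K}
    (h : Summable fun n ↦ ‖f n‖ / n.factorial * (‖s‖ + ‖t‖) ^ n)
    (hz : HasSum (fun n ↦ f n / n.factorial * (s + t) ^ n) z) :
    HasSum (fun p : ℕ × ℕ ↦
      f (p.1 + p.2) / (p.1.factorial * p.2.factorial) * s ^ p.1 * t ^ p.2) z :=
  hasSum_prod_of_hasSum_sum_antidiagonal (summable_norm_div_factorial_mul_pow h).of_norm <| by
    simpa only [sum_antidiagonal_div_factorial_mul_pow] using hz

end DoubleExponentialSeries

section BinomialSeries

lemma ascPochhammer_eval_eq_poch (a : ℂ) (n : ℕ) : (ascPochhammer ℂ n).eval a = poch a n := by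
  induction n with
  | zero => simp [poch]
  | succ n ih => simp [ascPochhammer_succ_right, poch, prod_range_succ, ih]

lemma multichoose_eq_poch_div_factorial (a : ℂ) (n : ℕ) :
    Ring.multichoose a n = poch a n / n.factorial := by
  rw [eq_div_iff (Nat.cast_ne_zero.2 n.factorial_ne_zero), mul_comm, ← nsmul_eq_mul,
    Ring.factorial_nsmul_multichoose_eq_ascPochhammer, Polynomial.ascPochhammer_smeval_eq_eval,
    ascPochhammer_eval_eq_poch]

lemma hasSum_one_sub_cpow_neg (a : ℂ) {z : ℂ} (hz : ‖z‖ < 1) :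
    HasSum (fun n : ℕ ↦ poch a n / n.factorial * z ^ n) ((1 - z) ^ (-a)) := by
  have h := (one_div_one_sub_cpow_hasFPowerSeriesOnBall_zero a).hasSum (y := z)
    (by simpa [← NNReal.coe_lt_coe, enorm] using hz)
  simpa [FormalMultilinearSeries.ofScalars, ← Ring.multichoose_eq,
    multichoose_eq_poch_div_factorial, cpow_neg, mul_comm] using h

lemma summable_norm_poch_div_factorial_mul_pow (a : ℂ) {r : ℝ} (hr₀ : 0 ≤ r) (hr₁ : r < 1) :
    Summable fun n : ℕ ↦ ‖poch a n‖ / n.factorial * r ^ n := by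
  have hr : ‖(r : ℂ)‖ = r := RCLike.norm_of_nonneg hr₀
  have h := (hasSum_one_sub_cpow_neg a (hr.trans_lt hr₁)).summable.norm
  simpa only [norm_mul, norm_div, norm_pow, norm_natCast, hr] using h

variable (a : ℂ) {s t : ℂ} (hst : ‖s‖ + ‖t‖ < 1)
include hst

lemma summable_norm_poch_div_factorial_mul_pow_mul_pow :
    Summable fun p : ℕ × ℕ ↦
      ‖poch a (p.1 + p.2) / (p.1.factorial * p.2.factorial) * s ^ p.1 * t ^ p.2‖ :=
  summable_norm_div_factorial_mul_pow
    (summable_norm_poch_div_factorial_mul_pow a (by positivity) hst)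

lemma hasSum_one_sub_sub_cpow_neg :
    HasSum (fun p : ℕ × ℕ ↦
        poch a (p.1 + p.2) / (p.1.factorial * p.2.factorial) * s ^ p.1 * t ^ p.2)
      ((1 - s - t) ^ (-a)) := by
  rw [sub_sub]
  exact hasSum_div_factorial_mul_pow
    (summable_norm_poch_div_factorial_mul_pow a (by positivity) hst)
    (hasSum_one_sub_cpow_neg a ((norm_add_le s t).trans_lt hst))

end BinomialSeries

section TermwiseIntegration

variable {α β ι K : Type*} [MeasurableSpace α] [MeasurableSpace β] [Countable ι] [RCLike K]
  {μ : Measure α} {ν : Measure β} {k : ι → K}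

section OneVariable

variable {w : α → K} {φ : ι → α → K} (hw : Integrable w μ) (hk : Summable fun i ↦ ‖k i‖)
  (hφ : ∀ i, AEStronglyMeasurable (φ i) μ) (hφ_le : ∀ i, ∀ᵐ x ∂μ, ‖φ i x‖ ≤ 1)
include hw hk hφ hφ_le

lemma integrable_mul_tsum_of_norm_le_one :
    Integrable (fun x ↦ w x * ∑' i, k i * φ i x) μ := by
  refine hw.mul_bdd (c := ∑' i, ‖k i‖) ?_ ?_
  · exact (AEMeasurable.tsum fun i ↦ ((hφ i).const_mul (k i)).aemeasurable).aestronglyMeasurable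
  · filter_upwards [ae_all_iff.2 hφ_le] with x hx
    refine tsum_of_norm_bounded hk.hasSum fun i ↦ ?_
    simpa using mul_le_of_le_one_right (norm_nonneg (k i)) (hx i)

lemma integral_mul_tsum_of_norm_le_one :
    ∫ x, w x * ∑' i, k i * φ i x ∂μ = ∑' i, k i * ∫ x, w x * φ i x ∂μ := by
  have hint (i : ι) : Integrable (fun x ↦ w x * φ i x) μ := hw.mul_bdd (hφ i) (hφ_le i)
  have hnorm (i : ι) : ∫ x, ‖k i * (w x * φ i x)‖ ∂μ ≤ ‖k i‖ * ∫ x, ‖w x‖ ∂μ := by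
    simp only [norm_mul (k i), integral_const_mul]
    gcongr ?_ * ?_
    refine integral_mono_ae (hint i).norm hw.norm ?_
    filter_upwards [hφ_le i] with x hx
    simpa using mul_le_of_le_one_right (norm_nonneg (w x)) hx
  have hsummable : Summable fun i ↦ ∫ x, ‖k i * (w x * φ i x)‖ ∂μ :=
    (hk.mul_right _).of_nonneg_of_le (fun i ↦ integral_nonneg fun x ↦ norm_nonneg _) hnorm
  simp only [← integral_const_mul, ← tsum_mul_left, mul_left_comm (w _)]
  exact (integral_tsum_of_summable_integral_norm (fun i ↦ (hint i).const_mul (k i))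
    hsummable).symm

end OneVariable

lemma integral_integral_mul_tsum_of_norm_le_one [SFinite μ] [SFinite ν] {w : α → K} {w' : β → K}
    {φ : ι → α → K} {ψ : ι → β → K} (hw : Integrable w μ) (hw' : Integrable w' ν)
    (hk : Summable fun i ↦ ‖k i‖)
    (hφ : ∀ i, AEStronglyMeasurable (φ i) μ) (hφ_le : ∀ i, ∀ᵐ x ∂μ, ‖φ i x‖ ≤ 1)
    (hψ : ∀ i, AEStronglyMeasurable (ψ i) ν) (hψ_le : ∀ i, ∀ᵐ y ∂ν, ‖ψ i y‖ ≤ 1) :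
    ∫ x, ∫ y, w x * w' y * ∑' i, k i * (φ i x * ψ i y) ∂ν ∂μ =
      ∑' i, k i * ((∫ x, w x * φ i x ∂μ) * ∫ y, w' y * ψ i y ∂ν) := by
  have hww' : Integrable (fun z : α × β ↦ w z.1 * w' z.2) (μ.prod ν) := hw.mul_prod hw'
  have hφψ (i : ι) : AEStronglyMeasurable (fun z : α × β ↦ φ i z.1 * ψ i z.2) (μ.prod ν) :=
    (hφ i).comp_fst.mul (hψ i).comp_snd
  have hφψ_le (i : ι) : ∀ᵐ z ∂μ.prod ν, ‖φ i z.1 * ψ i z.2‖ ≤ 1 := by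
    filter_upwards [Measure.quasiMeasurePreserving_fst.ae (hφ_le i),
      Measure.quasiMeasurePreserving_snd.ae (hψ_le i)] with z hz₁ hz₂
    simpa using mul_le_one₀ hz₁ (norm_nonneg _) hz₂
  rw [← integral_prod _ (integrable_mul_tsum_of_norm_le_one hww' hk hφψ hφψ_le),
    integral_mul_tsum_of_norm_le_one hww' hk hφψ hφψ_le]
  simp only [mul_mul_mul_comm (w _) (w' _)]
  exact tsum_congr fun i ↦ congrArg (k i * ·)
    (integral_prod_mul (fun x ↦ w x * φ i x) fun y ↦ w' y * ψ i y)

lemma intervalIntegral_intervalIntegral_mul_tsum_pow {w w' : ℝ → ℂ} {k : ℕ × ℕ → ℂ}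
    (hw : IntervalIntegrable w volume 0 1) (hw' : IntervalIntegrable w' volume 0 1)
    (hk : Summable fun p ↦ ‖k p‖) :
    ∫ u in (0 : ℝ)..1, ∫ v in (0 : ℝ)..1,
        w u * w' v * ∑' p : ℕ × ℕ, k p * ((u : ℂ) ^ p.1 * (v : ℂ) ^ p.2) =
      ∑' p, k p * ((∫ u in (0 : ℝ)..1, w u * (u : ℂ) ^ p.1) *
        ∫ v in (0 : ℝ)..1, w' v * (v : ℂ) ^ p.2) := by
  have hmeas (n : ℕ) : AEStronglyMeasurable (fun u : ℝ ↦ (u : ℂ) ^ n)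
      (volume.restrict (Set.Ioc 0 1)) := by fun_prop
  have hle (n : ℕ) : ∀ᵐ u : ℝ ∂volume.restrict (Set.Ioc 0 1), ‖(u : ℂ) ^ n‖ ≤ 1 := by
    filter_upwards [ae_restrict_mem measurableSet_Ioc] with u hu
    simpa [abs_of_pos hu.1] using pow_le_one₀ hu.1.le hu.2
  rw [intervalIntegrable_iff_integrableOn_Ioc_of_le zero_le_one] at hw hw'
  simp only [intervalIntegral.integral_of_le zero_le_one]
  exact integral_integral_mul_tsum_of_norm_le_one hw hw' hk
    (fun p ↦ hmeas p.1) (fun p ↦ hle p.1) (fun p ↦ hmeas p.2) (fun p ↦ hle p.2)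

end TermwiseIntegration

section BetaMoments

/-- The unnormalised beta density `t ^ (α - 1) * (1 - t) ^ (β - 1)`, the integrand of
`Complex.betaIntegral α β` on `[0, 1]`. -/
noncomputable def betaWeight (α β : ℂ) (t : ℝ) : ℂ :=
  (t : ℂ) ^ (α - 1) * (1 - (t : ℂ)) ^ (β - 1)

variable {α β : ℂ}

lemma intervalIntegrable_betaWeight (hα : 0 < α.re) (hβ : 0 < β.re) :
    IntervalIntegrable (betaWeight α β) volume 0 1 :=
  betaIntegral_convergent hα hβ

lemma ne_neg_natCast_of_re_pos_s8 {z : ℂ} (hz : 0 < z.re) (k : ℕ) : z ≠ -k := by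
  rintro rfl
  simp [k.cast_nonneg.not_gt] at hz

lemma Gamma_add_natCast {z : ℂ} (hz : ∀ k : ℕ, z ≠ -k) (n : ℕ) :
    Gamma (z + n) = Gamma z * poch z n := by
  rw [← ascPochhammer_eval_eq_poch, ← Gamma_add_nat_div_Gamma_eq z hz,
    mul_div_cancel₀ _ (Gamma_ne_zero hz)]

lemma betaIntegral_add_natCast_s8 (hα : 0 < α.re) (hβ : 0 < β.re) (n : ℕ) :
    betaIntegral (α + n) β = betaIntegral α β * (poch α n / poch (α + β) n) := by
  have hαn : 0 < (α + n).re := by simpa using add_pos_of_pos_of_nonneg hα n.cast_nonneg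
  rw [betaIntegral_eq_Gamma_mul_div _ _ hαn hβ, betaIntegral_eq_Gamma_mul_div _ _ hα hβ,
    add_right_comm, Gamma_add_natCast (ne_neg_natCast_of_re_pos_s8 hα),
    Gamma_add_natCast (ne_neg_natCast_of_re_pos_s8 (add_pos hα hβ))]
  ring

lemma integral_betaWeight_mul_pow (α β : ℂ) (n : ℕ) :
    ∫ t in (0 : ℝ)..1, betaWeight α β t * (t : ℂ) ^ n = betaIntegral (α + n) β := by
  simp only [betaIntegral, intervalIntegral.integral_of_le zero_le_one]
  refine setIntegral_congr_fun measurableSet_Ioc fun t ht ↦ ?_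
  have ht₀ : (t : ℂ) ≠ 0 := ofReal_ne_zero.2 ht.1.ne'
  simp only [betaWeight, add_sub_right_comm α, cpow_add _ _ ht₀, cpow_natCast]
  ring

end BetaMoments

lemma norm_mul_add_norm_mul_lt_one {R : Type*} [SeminormedRing R] {s t x y : R}
    (hs : ‖s‖ ≤ 1) (ht : ‖t‖ ≤ 1) (hxy : ‖x‖ + ‖y‖ < 1) : ‖s * x‖ + ‖t * y‖ < 1 :=
  calc
    ‖s * x‖ + ‖t * y‖ ≤ ‖s‖ * ‖x‖ + ‖t‖ * ‖y‖ := add_le_add (norm_mul_le s x) (norm_mul_le t y)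
    _ ≤ ‖x‖ + ‖y‖ := add_le_add (mul_le_of_le_one_left (norm_nonneg x) hs)
      (mul_le_of_le_one_left (norm_nonneg y) ht)
    _ < 1 := hxy

lemma integral_integral_betaWeight_mul_one_sub_sub_cpow_neg (a : ℂ) {α α' β β' x y : ℂ}
    (hα : 0 < α.re) (hβ : 0 < β.re) (hα' : 0 < α'.re) (hβ' : 0 < β'.re)
    (hxy : ‖x‖ + ‖y‖ < 1) :
    ∫ u in (0 : ℝ)..1, ∫ v in (0 : ℝ)..1,
        betaWeight α β u * betaWeight α' β' v * ((1 : ℂ) - u * x - v * y) ^ (-a) =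
      betaIntegral α β * betaIntegral α' β' *
        appellF2 a α α' (α + β) (α' + β') x y := by
  have hnorm : ∀ u ∈ Set.uIcc (0 : ℝ) 1, ‖(u : ℂ)‖ ≤ 1 := fun u hu ↦ by
    rw [Set.uIcc_of_le zero_le_one] at hu
    simpa [abs_of_nonneg hu.1] using hu.2
  have hexpand : ∀ u ∈ Set.uIcc (0 : ℝ) 1, ∀ v ∈ Set.uIcc (0 : ℝ) 1,
      ((1 : ℂ) - u * x - v * y) ^ (-a) = ∑' p : ℕ × ℕ,
        poch a (p.1 + p.2) / (p.1.factorial * p.2.factorial) * x ^ p.1 * y ^ p.2 *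
          ((u : ℂ) ^ p.1 * (v : ℂ) ^ p.2) := fun u hu v hv ↦ by
    have huv := norm_mul_add_norm_mul_lt_one (hnorm u hu) (hnorm v hv) hxy
    rw [← (hasSum_one_sub_sub_cpow_neg a huv).tsum_eq]
    exact tsum_congr fun p ↦ by ring
  rw [intervalIntegral.integral_congr fun u hu ↦ intervalIntegral.integral_congr fun v hv ↦
      congrArg (betaWeight α β u * betaWeight α' β' v * ·) (hexpand u hu v hv),
    intervalIntegral_intervalIntegral_mul_tsum_pow (intervalIntegrable_betaWeight hα hβ)
      (intervalIntegrable_betaWeight hα' hβ')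
      (summable_norm_poch_div_factorial_mul_pow_mul_pow a hxy),
    appellF2, ← tsum_mul_left]
  refine tsum_congr fun p ↦ ?_
  rw [integral_betaWeight_mul_pow, integral_betaWeight_mul_pow,
    betaIntegral_add_natCast_s8 hα hβ, betaIntegral_add_natCast_s8 hα' hβ']
  ring

theorem double_integral_appellF2_general (a b b' c c' x y : ℂ)
    (hb : 0 < b.re) (hbc : b.re < c.re) (hb' : 0 < b'.re) (hbc' : b'.re < c'.re)
    (hxy : ‖x‖ + ‖y‖ < 1) :
    ∫ u in (0:ℝ)..1, ∫ v in (0:ℝ)..1,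
        (u : ℂ) ^ (b - 1) * (v : ℂ) ^ (b' - 1) * ((1 : ℂ) - u) ^ (c - b - 1) *
        ((1 : ℂ) - v) ^ (c' - b' - 1) * ((1 : ℂ) - u * x - v * y) ^ (-a) =
      Gamma b * Gamma b' * Gamma (c - b) * Gamma (c' - b') / (Gamma c * Gamma c') *
        appellF2 a b b' c c' x y := by
  have hcb : 0 < (c - b).re := by simpa using hbc
  have hcb' : 0 < (c' - b').re := by simpa using hbc'
  have h := integral_integral_betaWeight_mul_one_sub_sub_cpow_neg a hb hcb hb' hcb' hxy
  rw [betaIntegral_eq_Gamma_mul_div _ _ hb hcb, betaIntegral_eq_Gamma_mul_div _ _ hb' hcb',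
    add_sub_cancel, add_sub_cancel] at h
  simp only [betaWeight, mul_mul_mul_comm _ _ (_ ^ (b' - 1)), ← mul_assoc] at h
  rw [h]
  ring

theorem double_integral_appellF2 (a b b' c c' : ℂ) (x y : ℝ)
    (hb : 0 < b.re) (hbc : b.re < c.re) (hb' : 0 < b'.re) (hbc' : b'.re < c'.re)
    (hc : ∀ n : ℕ, c ≠ -(n : ℂ)) (hc' : ∀ n : ℕ, c' ≠ -(n : ℂ))
    (hxy : |x| + |y| < 1) :
    ∫ u in (0:ℝ)..1, ∫ v in (0:ℝ)..1,
        (u : ℂ) ^ (b - 1) * (v : ℂ) ^ (b' - 1) * ((1 : ℂ) - u) ^ (c - b - 1) *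
        ((1 : ℂ) - v) ^ (c' - b' - 1) * ((1 : ℂ) - u * x - v * y) ^ (-a) =
      Complex.Gamma b * Complex.Gamma b' * Complex.Gamma (c - b) *
        Complex.Gamma (c' - b') / (Complex.Gamma c * Complex.Gamma c') *
        appellF2 a b b' c c' x y :=
  double_integral_appellF2_general a b b' c c' x y hb hbc hb' hbc' (by simpa using hxy)
end

section
/- Let a, b, b' be complex numbers with a not a nonpositive integer, and let x, y be real numbers with |x| + |y| < 1 such that |xy/((1−x)(1−y))| < 1. Then F₂(a; b, b'; a, a; x, y) = (1−x)^{−b} (1−y)^{−b'} · ₂F₁(b, b'; a; xy/((1−x)(1−y))). -/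
/-- Gauss hypergeometric series ₂F₁(a,b;c;x). -/
noncomputable def hyp2F1 (a b c x : ℂ) : ℂ :=
  ∑' n : ℕ, poch a n * poch b n / (n.factorial * poch c n) * x ^ n

/-!
By Chu–Vandermonde, `(a)_{m+n} / ((a)_m (a)_n) = ∑ₖ C(m,k) C(n,k) k! / (a)_k`. Inserting this in
`F₂(a;b,b';a,a;x,y)` and putting `m = k + i`, `n = k + j` gives the triple series (a case of the
Burchnall–Chaundy expansion)
`∑ₖ (b)_k (b')_k / (k! (a)_k) (xy)^k · ∑ᵢ (b+k)_i / i! x^i · ∑ⱼ (b'+k)_j / j! y^j`,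
whose inner sums are the binomial series of `(1-x)^{-b-k}` and `(1-y)^{-b'-k}`. Absolute convergence
follows by comparing the inner sums with `(1-|x|)^{-N-k-1}` and `(1-|y|)^{-N'-k-1}`: what remains
is a `₂F₁` series at `|x||y| / ((1-|x|)(1-|y|))`, which is less than `1` because
`|x| + |y| < 1`.
-/

open Filter Finset Topology
open scoped Nat

section Pochhammer

lemma poch_succ (a : ℂ) (n : ℕ) : poch a (n + 1) = poch a n * (a + n) :=
  prod_range_succ _ n

lemma poch_add (a : ℂ) (m n : ℕ) : poch a (m + n) = poch a m * poch (a + m) n := by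
  simp only [poch, prod_range_add, Nat.cast_add, add_assoc]

lemma poch_ne_zero {a : ℂ} (ha : ∀ n : ℕ, a ≠ -(n : ℂ)) (n : ℕ) : poch a n ≠ 0 :=
  prod_ne_zero_iff.mpr fun i _ h => ha i (eq_neg_of_add_eq_zero_left h)

lemma poch_eq_ascPochhammer_smeval (a : ℂ) (n : ℕ) : poch a n = (ascPochhammer ℕ n).smeval a := by
  rw [Polynomial.ascPochhammer_smeval_eq_eval]
  induction n with
  | zero => simp [poch]
  | succ n ih => rw [poch_succ, ih, ascPochhammer_succ_eval]

lemma descPochhammer_smeval_eq_poch (a : ℂ) (n : ℕ) :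
    (descPochhammer ℤ n).smeval a = poch (a - n + 1) n := by
  rw [Polynomial.descPochhammer_smeval_eq_ascPochhammer, poch_eq_ascPochhammer_smeval]

lemma poch_add_natCast_eq_sum (a : ℂ) (m n : ℕ) :
    poch (a + m) n = ∑ kl ∈ antidiagonal n,
      (n.choose kl.1 : ℂ) * (m.descFactorial kl.1 * poch (a + kl.1) kl.2) := by
  have reflected : poch (a + m) n = (descPochhammer ℤ n).smeval ((m : ℂ) + (a + n - 1)) := by
    rw [descPochhammer_smeval_eq_poch]
    congr 1
    ring
  rw [reflected, Ring.descPochhammer_smeval_add n (Commute.all _ _)]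
  refine sum_congr rfl fun ⟨k, l⟩ hkl => ?_
  rw [Polynomial.descPochhammer_smeval_eq_descFactorial, descPochhammer_smeval_eq_poch,
    ← mem_antidiagonal.mp hkl]
  congr 3
  push_cast
  ring

lemma poch_add_div_poch_mul_poch {a : ℂ} (ha : ∀ n : ℕ, a ≠ -(n : ℂ)) (m n : ℕ) :
    poch a (m + n) / (poch a m * poch a n) =
      ∑ k ∈ range (n + 1), (m.choose k * n.choose k * k ! : ℂ) / poch a k := by
  rw [poch_add, mul_div_mul_left _ _ (poch_ne_zero ha m), poch_add_natCast_eq_sum, sum_div,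
    ← Nat.sum_antidiagonal_eq_sum_range_succ
      (fun k _ => (m.choose k * n.choose k * k ! : ℂ) / poch a k) n]
  refine sum_congr rfl fun ⟨k, l⟩ hkl => ?_
  rw [← mem_antidiagonal.mp hkl, poch_add, Nat.descFactorial_eq_factorial_mul_choose]
  have hl : poch (a + k) l ≠ 0 := right_ne_zero_of_mul (poch_add a k l ▸ poch_ne_zero ha (k + l))
  push_cast
  field_simp

lemma norm_poch_le_ascFactorial {b : ℂ} {N : ℕ} (hb : ‖b‖ ≤ N) (n : ℕ) :
    ‖poch b n‖ ≤ N.ascFactorial n := by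
  rw [poch, norm_prod, Nat.ascFactorial_eq_prod_range, Nat.cast_prod]
  refine prod_le_prod (fun _ _ => norm_nonneg _) fun i _ => ?_
  calc ‖b + i‖ ≤ ‖b‖ + ‖(i : ℂ)‖ := norm_add_le _ _
    _ ≤ (N + i : ℕ) := by simpa using hb

end Pochhammer

section BinomialSeries

/-- The `n`-th term of the binomial series of `(1 - x) ^ (-b)`. -/
noncomputable def binomialTerm (b x : ℂ) (n : ℕ) : ℂ := poch b n / n ! * x ^ n

lemma binomialTerm_add_mul_choose (b x : ℂ) (k i : ℕ) :
    binomialTerm b x (k + i) * (k + i).choose k =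
      poch b k / k ! * x ^ k * binomialTerm (b + k) x i := by
  have hki : ((k + i)! : ℂ) ≠ 0 := mod_cast (k + i).factorial_ne_zero
  rw [binomialTerm, binomialTerm, poch_add, Nat.cast_add_choose, pow_add]
  field_simp

lemma choose_add_sub_one_eq_poch_div_factorial (b : ℂ) (n : ℕ) :
    Ring.choose (b + n - 1) n = poch b n / n ! := by
  rw [eq_div_iff (mod_cast n.factorial_ne_zero), ← Ring.multichoose_eq, mul_comm, ← nsmul_eq_mul,
    Ring.factorial_nsmul_multichoose_eq_ascPochhammer, poch_eq_ascPochhammer_smeval]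

lemma hasSum_binomialTerm (b : ℂ) {x : ℂ} (hx : ‖x‖ < 1) :
    HasSum (binomialTerm b x) ((1 - x) ^ (-b)) := by
  have hx_mem : x ∈ Metric.eball (0 : ℂ) 1 := by
    simpa [enorm_eq_nnnorm, ← NNReal.coe_lt_one] using hx
  have h := (Complex.one_div_one_sub_cpow_hasFPowerSeriesOnBall_zero b).hasSum hx_mem
  simp only [zero_add, one_div, ← Complex.cpow_neg,
    FormalMultilinearSeries.ofScalars_apply_eq', choose_add_sub_one_eq_poch_div_factorial] at h
  exact h

lemma norm_binomialTerm_le {b : ℂ} {N : ℕ} (hb : ‖b‖ ≤ N + 1) (x : ℂ) (n : ℕ) :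
    ‖binomialTerm b x n‖ ≤ (n + N).choose N * ‖x‖ ^ n := by
  have coeff_le : ‖poch b n‖ / n ! ≤ (n + N).choose N := by
    rw [div_le_iff₀ (by positivity), mul_comm, ← Nat.choose_symm_add, add_comm n N]
    exact_mod_cast Nat.ascFactorial_eq_factorial_mul_choose N n ▸
      norm_poch_le_ascFactorial (N := N + 1) (mod_cast hb) n
  rw [binomialTerm, norm_mul, norm_div, norm_pow, Complex.norm_natCast]
  gcongr

lemma summable_norm_binomialTerm (b : ℂ) {x : ℂ} (hx : ‖x‖ < 1) :
    Summable fun n => ‖binomialTerm b x n‖ := by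
  obtain ⟨N, hN⟩ := exists_nat_ge ‖b‖
  exact .of_nonneg_of_le (fun _ => norm_nonneg _) (norm_binomialTerm_le (by linarith) x)
    (summable_choose_mul_geometric_of_norm_lt_one N (by simpa using hx))

lemma tsum_norm_binomialTerm_le {b x : ℂ} {N : ℕ} (hb : ‖b‖ ≤ N + 1) (hx : ‖x‖ < 1) :
    ∑' n, ‖binomialTerm b x n‖ ≤ 1 / (1 - ‖x‖) ^ (N + 1) := by
  have majorant := hasSum_choose_mul_geometric_of_norm_lt_one N (r := ‖x‖) (by simpa using hx)
  rw [← majorant.tsum_eq]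
  exact (summable_norm_binomialTerm b hx).tsum_le_tsum (norm_binomialTerm_le hb x) majorant.summable

lemma tsum_binomialTerm_mul_binomialTerm (b b' : ℂ) {x y : ℂ} (hx : ‖x‖ < 1) (hy : ‖y‖ < 1) :
    ∑' p : ℕ × ℕ, binomialTerm b x p.1 * binomialTerm b' y p.2 =
      (1 - x) ^ (-b) * (1 - y) ^ (-b') := by
  rw [← tsum_mul_tsum_of_summable_norm (summable_norm_binomialTerm b hx)
    (summable_norm_binomialTerm b' hy), (hasSum_binomialTerm b hx).tsum_eq,
    (hasSum_binomialTerm b' hy).tsum_eq]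

end BinomialSeries

section GaussSeries

/-- The `n`-th term of the Gauss series `₂F₁(a,b;c;z)`. -/
noncomputable def hyp2F1Term (a b c z : ℂ) (n : ℕ) : ℂ :=
  poch a n * poch b n / (n ! * poch c n) * z ^ n

lemma hyp2F1Term_mul (a b c z w : ℂ) (n : ℕ) :
    hyp2F1Term a b c (z * w) n = hyp2F1Term a b c z n * w ^ n := by
  rw [hyp2F1Term, hyp2F1Term, mul_pow, mul_assoc]

lemma hyp2F1Term_succ (a b c z : ℂ) (n : ℕ) :
    hyp2F1Term a b c z (n + 1) =
      (a + n) / (1 + n) * ((b + n) / (c + n)) * z * hyp2F1Term a b c z n := by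
  simp only [hyp2F1Term, poch_succ, Nat.factorial_succ, Nat.cast_mul, Nat.cast_succ, pow_succ,
    div_eq_mul_inv, mul_inv, add_comm (1 : ℂ) n]
  ring

lemma summable_hyp2F1Term (a b c : ℂ) {z : ℂ} (hz : ‖z‖ < 1) : Summable (hyp2F1Term a b c z) := by
  have ratio_tendsto : Tendsto
      (fun n : ℕ => (a + 1 * n) / (1 + 1 * n) * ((b + 1 * n) / (c + 1 * n)) * z)
      atTop (𝓝 (1 / 1 * (1 / 1) * z)) :=
    ((tendsto_add_mul_div_add_mul_atTop_nhds a 1 1 one_ne_zero).mul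
      (tendsto_add_mul_div_add_mul_atTop_nhds b c 1 one_ne_zero)).mul_const z
  simp only [one_mul, div_one] at ratio_tendsto
  obtain ⟨ρ, hzρ, hρ⟩ := exists_between hz
  refine summable_of_ratio_norm_eventually_le hρ ?_
  filter_upwards [ratio_tendsto.norm.eventually_le_const hzρ] with n hn
  rw [hyp2F1Term_succ, norm_mul]
  gcongr

end GaussSeries

section TripleSeries

/-- The `(k, i, j)`-th term of the triple series expanding `F₂(a;b,b';a,a;x,y)`. -/
noncomputable def tripleTerm (a b b' x y : ℂ) (q : ℕ × ℕ × ℕ) : ℂ :=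
  hyp2F1Term b b' a (x * y) q.1 *
    (binomialTerm (b + q.1) x q.2.1 * binomialTerm (b' + q.1) y q.2.2)

/-- The terms of the triple series indexed by `((m, n), k)` with `m = k + i` and `n = k + j`; they
vanish unless `k ≤ m` and `k ≤ n`. -/
noncomputable def regroupedTerm (a b b' x y : ℂ) (q : (ℕ × ℕ) × ℕ) : ℂ :=
  binomialTerm b x q.1.1 * binomialTerm b' y q.1.2 *
    ((q.1.1.choose q.2 * q.1.2.choose q.2 * q.2 ! : ℂ) / poch a q.2)

/-- The reindexing `(k, i, j) ↦ ((k + i, k + j), k)` relating `tripleTerm` to `regroupedTerm`. -/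
def regroup (q : ℕ × ℕ × ℕ) : (ℕ × ℕ) × ℕ := ((q.1 + q.2.1, q.1 + q.2.2), q.1)

lemma regroup_injective : Function.Injective regroup := by
  rintro ⟨k, i, j⟩ ⟨k', i', j'⟩ h
  simp only [regroup, Prod.mk.injEq] at h ⊢
  omega

lemma mem_range_regroup {m n k : ℕ} (hm : k ≤ m) (hn : k ≤ n) :
    ((m, n), k) ∈ Set.range regroup :=
  ⟨(k, m - k, n - k), by simp [regroup, hm, hn]⟩

variable (a b b' x y : ℂ)

lemma regroupedTerm_regroup (q : ℕ × ℕ × ℕ) :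
    regroupedTerm a b b' x y (regroup q) = tripleTerm a b b' x y q := by
  obtain ⟨k, i, j⟩ := q
  calc regroupedTerm a b b' x y (regroup (k, i, j))
      = binomialTerm b x (k + i) * (k + i).choose k *
          (binomialTerm b' y (k + j) * (k + j).choose k) * (k ! / poch a k) := by
        simp only [regroupedTerm, regroup]
        ring
    _ = tripleTerm a b b' x y (k, i, j) := by
        simp only [binomialTerm_add_mul_choose, tripleTerm, hyp2F1Term, mul_pow]
        field_simp

lemma regroupedTerm_eq_zero_of_notMem_range (q : (ℕ × ℕ) × ℕ) (hq : q ∉ Set.range regroup) :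
    regroupedTerm a b b' x y q = 0 := by
  obtain ⟨⟨m, n⟩, k⟩ := q
  have hlt : m < k ∨ n < k := by
    by_contra! h
    exact hq (mem_range_regroup h.1 h.2)
  rcases hlt with hm | hn
  · simp [regroupedTerm, Nat.choose_eq_zero_of_lt hm]
  · simp [regroupedTerm, Nat.choose_eq_zero_of_lt hn]

lemma tsum_regroupedTerm_fiber (ha : ∀ n : ℕ, a ≠ -(n : ℂ)) (m n : ℕ) :
    ∑' k, regroupedTerm a b b' x y ((m, n), k) =
      poch a (m + n) * poch b m * poch b' n / (m ! * n ! * poch a m * poch a n) *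
        x ^ m * y ^ n := by
  have vanish : ∀ k ∉ range (n + 1), regroupedTerm a b b' x y ((m, n), k) = 0 := fun k hk => by
    simp [regroupedTerm, Nat.choose_eq_zero_of_lt (show n < k by simpa using hk)]
  rw [tsum_eq_sum vanish]
  simp only [regroupedTerm]
  rw [← mul_sum, ← poch_add_div_poch_mul_poch ha, binomialTerm, binomialTerm]
  field_simp

variable {x y}

lemma summable_norm_tripleTerm_fiber (hx : ‖x‖ < 1) (hy : ‖y‖ < 1) (k : ℕ) :
    Summable fun p : ℕ × ℕ => ‖tripleTerm a b b' x y (k, p)‖ := by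
  simp only [tripleTerm, norm_mul (hyp2F1Term _ _ _ _ _)]
  exact ((summable_norm_binomialTerm (b + k) hx).mul_norm
    (summable_norm_binomialTerm (b' + k) hy)).mul_left _

lemma tsum_norm_tripleTerm_fiber_le (hx : ‖x‖ < 1) (hy : ‖y‖ < 1) {N N' : ℕ} (hb : ‖b‖ ≤ N)
    (hb' : ‖b'‖ ≤ N') (k : ℕ) :
    ∑' p : ℕ × ℕ, ‖tripleTerm a b b' x y (k, p)‖ ≤
      1 / ((1 - ‖x‖) ^ (N + 1) * (1 - ‖y‖) ^ (N' + 1)) *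
        ‖hyp2F1Term b b' a (‖x‖ * ‖y‖ / ((1 - ‖x‖) * (1 - ‖y‖)) : ℝ) k‖ := by
  have shift {c : ℂ} {M : ℕ} (hc : ‖c‖ ≤ M) : ‖c + k‖ ≤ (M + k : ℕ) + 1 := by
    calc ‖c + k‖ ≤ ‖c‖ + ‖(k : ℂ)‖ := norm_add_le _ _
      _ ≤ (M + k : ℕ) + 1 := by simp only [Complex.norm_natCast, Nat.cast_add]; linarith
  have hx' : 0 < 1 - ‖x‖ := by linarith
  have hy' : 0 < 1 - ‖y‖ := by linarith
  calc ∑' p : ℕ × ℕ, ‖tripleTerm a b b' x y (k, p)‖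
      = ‖hyp2F1Term b b' a (x * y) k‖ *
          ((∑' i, ‖binomialTerm (b + k) x i‖) * ∑' j, ‖binomialTerm (b' + k) y j‖) := by
        rw [tsum_mul_tsum_of_summable_norm (summable_norm_binomialTerm (b + k) hx).norm
          (summable_norm_binomialTerm (b' + k) hy).norm, ← tsum_mul_left]
        simp only [tripleTerm, norm_mul]
    _ ≤ ‖hyp2F1Term b b' a (x * y) k‖ *
          (1 / (1 - ‖x‖) ^ (N + k + 1) * (1 / (1 - ‖y‖) ^ (N' + k + 1))) := by
        gcongr
        · exact tsum_norm_binomialTerm_le (shift hb) hx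
        · exact tsum_norm_binomialTerm_le (shift hb') hy
    _ = _ := by
        simp only [hyp2F1Term, norm_mul, norm_pow, Complex.norm_real, norm_div, norm_norm,
          Real.norm_of_nonneg hx'.le, Real.norm_of_nonneg hy'.le, div_pow, mul_pow, pow_add]
        field_simp

lemma mul_div_one_sub_mul_one_sub_lt_one {s t : ℝ} (hs : s < 1) (ht : t < 1) (hst : s + t < 1) :
    s * t / ((1 - s) * (1 - t)) < 1 := by
  rw [div_lt_one (mul_pos (sub_pos.mpr hs) (sub_pos.mpr ht))]
  linarith

lemma summable_tripleTerm (hxy : ‖x‖ + ‖y‖ < 1) : Summable (tripleTerm a b b' x y) := by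
  have hx : ‖x‖ < 1 := by linarith [norm_nonneg y]
  have hy : ‖y‖ < 1 := by linarith [norm_nonneg x]
  have hr : ‖((‖x‖ * ‖y‖ / ((1 - ‖x‖) * (1 - ‖y‖)) : ℝ) : ℂ)‖ < 1 := by
    rw [Complex.norm_of_nonneg]
    · exact mul_div_one_sub_mul_one_sub_lt_one hx hy hxy
    · have := sub_pos.mpr hx
      have := sub_pos.mpr hy
      positivity
  obtain ⟨N, hN⟩ := exists_nat_ge ‖b‖
  obtain ⟨N', hN'⟩ := exists_nat_ge ‖b'‖
  refine .of_norm ((summable_prod_of_nonneg fun _ => norm_nonneg _).mpr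
    ⟨summable_norm_tripleTerm_fiber a b b' hx hy, ?_⟩)
  exact .of_nonneg_of_le (fun _ => tsum_nonneg fun _ => norm_nonneg _)
    (tsum_norm_tripleTerm_fiber_le a b b' hx hy hN hN')
    ((summable_hyp2F1Term b b' a hr).norm.mul_left _)

lemma tsum_tripleTerm_fiber (hx : ‖x‖ < 1) (hy : ‖y‖ < 1) (k : ℕ) :
    ∑' p : ℕ × ℕ, tripleTerm a b b' x y (k, p) =
      (1 - x) ^ (-b) * (1 - y) ^ (-b') * hyp2F1Term b b' a (x * y / ((1 - x) * (1 - y))) k := by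
  have one_sub_ne_zero {z : ℂ} (hz : ‖z‖ < 1) : 1 - z ≠ 0 :=
    sub_ne_zero.mpr fun h => by simp [← h] at hz
  simp only [tripleTerm]
  rw [tsum_mul_left, tsum_binomialTerm_mul_binomialTerm _ _ hx hy, div_eq_mul_inv,
    hyp2F1Term_mul b b' a (x * y), neg_add', neg_add', Complex.cpow_sub _ _ (one_sub_ne_zero hx),
    Complex.cpow_sub _ _ (one_sub_ne_zero hy), Complex.cpow_natCast, Complex.cpow_natCast,
    inv_pow, mul_pow]
  field_simp

theorem tsum_tripleTerm (hxy : ‖x‖ + ‖y‖ < 1) :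
    ∑' q, tripleTerm a b b' x y q =
      (1 - x) ^ (-b) * (1 - y) ^ (-b') * hyp2F1 b b' a (x * y / ((1 - x) * (1 - y))) := by
  have hx : ‖x‖ < 1 := by linarith [norm_nonneg y]
  have hy : ‖y‖ < 1 := by linarith [norm_nonneg x]
  rw [(summable_tripleTerm a b b' hxy).tsum_prod, hyp2F1, ← tsum_mul_left]
  exact tsum_congr (tsum_tripleTerm_fiber a b b' hx hy)

lemma hasSum_regroupedTerm (hxy : ‖x‖ + ‖y‖ < 1) :
    HasSum (regroupedTerm a b b' x y) (∑' q, tripleTerm a b b' x y q) := by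
  rw [← regroup_injective.hasSum_iff (regroupedTerm_eq_zero_of_notMem_range a b b' x y),
    funext (regroupedTerm_regroup a b b' x y) (f := _ ∘ _)]
  exact (summable_tripleTerm a b b' hxy).hasSum

theorem appellF2_self_eq_tsum_tripleTerm (ha : ∀ n : ℕ, a ≠ -(n : ℂ)) (hxy : ‖x‖ + ‖y‖ < 1) :
    appellF2 a b b' a a x y = ∑' q, tripleTerm a b b' x y q := by
  have hsum := hasSum_regroupedTerm a b b' hxy
  rw [← hsum.tsum_eq, hsum.summable.tsum_prod, appellF2]
  exact tsum_congr fun p => (tsum_regroupedTerm_fiber a b b' x y ha p.1 p.2).symm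

end TripleSeries

theorem appellF2_reduction_c_eq_a_general (a b b' x y : ℂ) (ha : ∀ n : ℕ, a ≠ -(n : ℂ))
    (hxy : ‖x‖ + ‖y‖ < 1) :
    appellF2 a b b' a a x y =
      (1 - x) ^ (-b) * (1 - y) ^ (-b') * hyp2F1 b b' a (x * y / ((1 - x) * (1 - y))) :=
  (appellF2_self_eq_tsum_tripleTerm a b b' ha hxy).trans (tsum_tripleTerm a b b' hxy)

theorem appellF2_reduction_c_eq_a (a b b' : ℂ) (x y : ℝ)
    (ha : ∀ n : ℕ, a ≠ -(n : ℂ))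
    (hxy : |x| + |y| < 1) (hxy' : |x * y / ((1 - x) * (1 - y))| < 1) :
    appellF2 a b b' a a x y =
      ((1 : ℂ) - x) ^ (-b) * ((1 : ℂ) - y) ^ (-b') *
        hyp2F1 b b' a ((x : ℂ) * y / ((1 - x) * (1 - y))) :=
  appellF2_reduction_c_eq_a_general a b b' x y ha (by simpa using hxy)
end
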